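/- arXiv:1509.06501 — 2 statements merged into one kernel-verified Lean document; each statement's English description precedes it below -/
import Mathlib

section
/- Let (M1, F1) and (M2, F2) be FFA over the same alphabet Σ, with Mi = (Qi, Σ, Ei, Ii). Let M be the synchronous product NFA with state set Q1×Q2, initial states I1×I2, and transitions (q1,q2) →a (q1',q2') whenever q1 →a q1' in M1 and q2 →a q2' in M2, and let F ⊆ (Q1×Q2)×Σ be defined by ((q1,q2),a) ∈ F iff (q1,a) ∈ F1 or (q2,a) ∈ F2. Then L(M) = L(M1) ∩ L(M2) and F flanks M. -/
/-- A nondeterministic finite automaton (all states final). -/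
structure NFA' (Q A : Type) where
  E : Q → A → Q → Prop
  I : Set Q

namespace NFA'

variable {Q A : Type}

/-- One step of the automaton on a set of states. -/
def step (M : NFA' Q A) (S : Set Q) (a : A) : Set Q := {q' | ∃ q ∈ S, M.E q a q'}

/-- `M.reach u` is the set of states reached after reading the word `u`
(`M(ε) = I`, `M(u·a) = {q' | ∃ q ∈ M(u), (q,a,q') ∈ E}`). -/
def reach (M : NFA' Q A) (u : List A) : Set Q := u.foldl M.step M.I

/-- The (prefix-closed) language of `M`: words `u` with `M(u) ≠ ∅`. -/
def lang (M : NFA' Q A) : Set (List A) := {u | (M.reach u).Nonempty}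

/-- `F` flanks `M`: for all words `u` and symbols `a`,
`u ∈ L(M) ∧ u·a ∉ L(M)` iff some state of `M(u)` forbids `a`. -/
def Flanks (M : NFA' Q A) (F : Q → A → Prop) : Prop :=
  ∀ (u : List A) (a : A),
    (u ∈ M.lang ∧ u ++ [a] ∉ M.lang) ↔ ∃ q ∈ M.reach u, F q a

end NFA'

/-- Synchronous product of two NFA. -/
def prodAut {Q1 Q2 A : Type} (M1 : NFA' Q1 A) (M2 : NFA' Q2 A) :
    NFA' (Q1 × Q2) A where
  E s a s' := M1.E s.1 a s'.1 ∧ M2.E s.2 a s'.2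
  I := {s | s.1 ∈ M1.I ∧ s.2 ∈ M2.I}

theorem exists_mem_prod_or_iff {α β : Type*} {S : Set α} {T : Set β} {p : α → Prop}
    {q : β → Prop} :
    (∃ s ∈ S ×ˢ T, p s.1 ∨ q s.2) ↔
      (∃ x ∈ S, p x) ∧ T.Nonempty ∨ S.Nonempty ∧ ∃ y ∈ T, q y := by
  constructor
  · rintro ⟨⟨x, y⟩, ⟨hx, hy⟩, hp | hq⟩
    · exact Or.inl ⟨⟨x, hx, hp⟩, y, hy⟩
    · exact Or.inr ⟨⟨x, hx⟩, y, hy, hq⟩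
  · rintro (⟨⟨x, hx, hp⟩, y, hy⟩ | ⟨⟨x, hx⟩, y, hy, hq⟩)
    · exact ⟨(x, y), ⟨hx, hy⟩, Or.inl hp⟩
    · exact ⟨(x, y), ⟨hx, hy⟩, Or.inr hq⟩

namespace NFA'

theorem reach_append_singleton {Q A : Type} (M : NFA' Q A) (u : List A) (a : A) :
    M.reach (u ++ [a]) = M.step (M.reach u) a :=
  List.foldl_concat M.step M.I a u

section Product

variable {Q1 Q2 A : Type} (M1 : NFA' Q1 A) (M2 : NFA' Q2 A)

theorem step_prodAut (S : Set Q1) (T : Set Q2) (a : A) :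
    (prodAut M1 M2).step (S ×ˢ T) a = M1.step S a ×ˢ M2.step T a := by
  ext ⟨q1', q2'⟩
  constructor
  · rintro ⟨⟨q1, q2⟩, ⟨hq1, hq2⟩, hE1, hE2⟩
    exact ⟨⟨q1, hq1, hE1⟩, q2, hq2, hE2⟩
  · rintro ⟨⟨q1, hq1, hE1⟩, q2, hq2, hE2⟩
    exact ⟨(q1, q2), ⟨hq1, hq2⟩, hE1, hE2⟩

theorem reach_prodAut (u : List A) :
    (prodAut M1 M2).reach u = M1.reach u ×ˢ M2.reach u := by
  induction u using List.reverseRecOn with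
  | nil => rfl
  | append_singleton u a ih => simp only [reach_append_singleton, ih, step_prodAut]

theorem lang_prodAut : (prodAut M1 M2).lang = M1.lang ∩ M2.lang := by
  ext u
  simp only [lang, reach_prodAut, Set.prod_nonempty_iff, Set.mem_inter_iff, Set.mem_ofPred_eq]

variable {M1 M2}

protected theorem Flanks.prodAut {F1 : Q1 → A → Prop} {F2 : Q2 → A → Prop}
    (h1 : M1.Flanks F1) (h2 : M2.Flanks F2) :
    (prodAut M1 M2).Flanks (fun s a => F1 s.1 a ∨ F2 s.2 a) := by
  intro u a
  calc
    u ∈ (prodAut M1 M2).lang ∧ u ++ [a] ∉ (prodAut M1 M2).lang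
    _ ↔ (u ∈ M1.lang ∧ u ∈ M2.lang) ∧ ¬(u ++ [a] ∈ M1.lang ∧ u ++ [a] ∈ M2.lang) := by
      simp only [lang_prodAut, Set.mem_inter_iff]
    _ ↔ (u ∈ M1.lang ∧ u ++ [a] ∉ M1.lang) ∧ u ∈ M2.lang ∨
        u ∈ M1.lang ∧ u ∈ M2.lang ∧ u ++ [a] ∉ M2.lang := by
      tauto
    _ ↔ (∃ q ∈ M1.reach u, F1 q a) ∧ (M2.reach u).Nonempty ∨
        (M1.reach u).Nonempty ∧ ∃ q ∈ M2.reach u, F2 q a :=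
      or_congr (and_congr_left' (h1 u a)) (and_congr_right' (h2 u a))
    _ ↔ ∃ s ∈ (prodAut M1 M2).reach u, F1 s.1 a ∨ F2 s.2 a := by
      rw [reach_prodAut]
      exact exists_mem_prod_or_iff.symm

end Product

end NFA'

theorem stmt7_general {Q1 Q2 A : Type} (M1 : NFA' Q1 A) (M2 : NFA' Q2 A)
    (F1 : Q1 → A → Prop) (F2 : Q2 → A → Prop)
    (h1 : M1.Flanks F1) (h2 : M2.Flanks F2) :
    (prodAut M1 M2).lang = M1.lang ∩ M2.lang ∧
    (prodAut M1 M2).Flanks (fun s a => F1 s.1 a ∨ F2 s.2 a) :=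
  ⟨NFA'.lang_prodAut M1 M2, h1.prodAut h2⟩

/-- the synchronous product of two FFA accepts the intersection of
their languages, and is flanked by `((q1,q2),a) ∈ F` iff `(q1,a) ∈ F1` or `(q2,a) ∈ F2`. -/
theorem stmt7 {Q1 Q2 A : Type} [Fintype Q1] [Fintype Q2] [Fintype A]
    (M1 : NFA' Q1 A) (M2 : NFA' Q2 A)
    (F1 : Q1 → A → Prop) (F2 : Q2 → A → Prop)
    (h1 : M1.Flanks F1) (h2 : M2.Flanks F2) :
    (prodAut M1 M2).lang = M1.lang ∩ M2.lang ∧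
    (prodAut M1 M2).Flanks (fun s a => F1 s.1 a ∨ F2 s.2 a) :=
  stmt7_general M1 M2 F1 F2 h1 h2
end

section
/- Fix n ≥ 1, let Π_n = {1,…,n} and Θ_n = {♯_1,…,♯_n} be disjoint copies of an n-element alphabet, Σ = Π_n ∪ Θ_n, and let L_n = Π_n* ∪ ⋃_{i=1}^n (Π_n*·i·Π_n*·♯_i). Let A_n be the NFA over Σ with state set {p, r} ∪ {p_i | i ∈ 1..n} ∪ {q_i | i ∈ 1..n} (so 2n+2 states), initial state p, and transitions, for every i ∈ 1..n: p →i q_i, p_i →i q_i, q_i →i q_i; for every j ≠ i: p →j p_i, p_i →j p_i, q_i →j q_i; and q_i →♯_i r. Then L(A_n) = L_n. -/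
/-- The language `L_n` over `Σ = Π_n ⊕ Θ_n` (where `Sum.inl i` is the plain
symbol `i` and `Sum.inr i` is `♯_i`). -/
def Ln (n : ℕ) : Set (List (Fin n ⊕ Fin n)) :=
  {u | ∀ x ∈ u, x.isLeft = true} ∪
  ⋃ i : Fin n, {w | ∃ v : List (Fin n ⊕ Fin n),
    (∀ x ∈ v, x.isLeft = true) ∧ Sum.inl i ∈ v ∧ w = v ++ [Sum.inr i]}

/-- The states of the NFA `A_n`: `p`, `r` and the states `p_i`, `q_i` for `i ∈ 1..n`. -/
inductive St (n : ℕ) : Type where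
  | p : St n
  | r : St n
  | pi (i : Fin n) : St n
  | qi (i : Fin n) : St n
  deriving DecidableEq

instance (n : ℕ) : Fintype (St n) := by
  classical
  have : Function.Surjective
      (fun x : (Unit ⊕ Unit) ⊕ (Fin n ⊕ Fin n) =>
        match x with
        | .inl (.inl _) => St.p
        | .inl (.inr _) => St.r
        | .inr (.inl i) => St.pi i
        | .inr (.inr i) => St.qi i) := by
    intro s; cases s with
    | p => exact ⟨.inl (.inl ()), rfl⟩
    | r => exact ⟨.inl (.inr ()), rfl⟩
    | pi i => exact ⟨.inr (.inl i), rfl⟩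
    | qi i => exact ⟨.inr (.inr i), rfl⟩
  exact Fintype.ofSurjective _ this

/-- The NFA `A_n`: initial state `p`, and for every `i ∈ 1..n` the transitions
`p →i q_i`, `p_i →i q_i`, `q_i →i q_i`; for every `j ≠ i` the transitions
`p →j p_i`, `p_i →j p_i`, `q_i →j q_i`; and `q_i →♯_i r`. -/
def An (n : ℕ) : NFA' (St n) (Fin n ⊕ Fin n) where
  E s x s' :=
    (∃ i : Fin n, s = St.p ∧ x = Sum.inl i ∧ s' = St.qi i) ∨
    (∃ i : Fin n, s = St.pi i ∧ x = Sum.inl i ∧ s' = St.qi i) ∨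
    (∃ i j : Fin n, s = St.qi i ∧ x = Sum.inl j ∧ s' = St.qi i) ∨
    (∃ i j : Fin n, j ≠ i ∧ s = St.p ∧ x = Sum.inl j ∧ s' = St.pi i) ∨
    (∃ i j : Fin n, j ≠ i ∧ s = St.pi i ∧ x = Sum.inl j ∧ s' = St.pi i) ∨
    (∃ i : Fin n, s = St.qi i ∧ x = Sum.inr i ∧ s' = St.r)
  I := {St.p}

/-!
The automaton guesses a symbol `i` on its first step and thereafter only records whether `i` has
been read. Hence, after reading `u`, it can be in `p` or `p_i` exactly when `u` is a word over `Π_n`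
without `i`, in `q_i` exactly when `u` is a word over `Π_n` containing `i`, and in `r` exactly
when `u` is a word of the second kind followed by `♯_i`, for some `i`.
-/

namespace NFA'

variable {Q A : Type} {M : NFA' Q A} {u : List A} {a : A} {q : Q}

theorem mem_reach_nil : q ∈ M.reach [] ↔ q ∈ M.I :=
  Iff.rfl

theorem mem_reach_append_singleton :
    q ∈ M.reach (u ++ [a]) ↔ ∃ s ∈ M.reach u, M.E s a q := by
  simp only [reach, step, List.foldl_append, List.foldl_cons, List.foldl_nil, Set.mem_ofPred_eq]

end NFA'

/-- Plain words, i.e. words over the left summand of the alphabet. For the alphabet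
`Σ = Π_n ⊕ Θ_n` these are the words of `Π_n*`. -/
def IsPlain {α β : Type*} (u : List (α ⊕ β)) : Prop :=
  ∀ x ∈ u, x.isLeft = true

namespace IsPlain

variable {α β : Type*} {u : List (α ⊕ β)} {a : α ⊕ β}

theorem nil : IsPlain ([] : List (α ⊕ β)) :=
  List.forall_mem_nil _

theorem append_singleton_iff : IsPlain (u ++ [a]) ↔ IsPlain u ∧ ∃ j, a = Sum.inl j := by
  simp only [IsPlain, List.forall_mem_append, List.forall_mem_singleton, Sum.isLeft_iff]

theorem exists_inl_mem (hu : IsPlain u) (hne : u ≠ []) : ∃ j, Sum.inl j ∈ u := by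
  obtain ⟨x, hx⟩ := List.exists_mem_of_ne_nil u hne
  obtain ⟨j, rfl⟩ := Sum.isLeft_iff.1 (hu x hx)
  exact ⟨j, hx⟩

end IsPlain

theorem mem_Ln_iff {n : ℕ} {u : List (Fin n ⊕ Fin n)} :
    u ∈ Ln n ↔
      IsPlain u ∨ ∃ i v, IsPlain v ∧ Sum.inl i ∈ v ∧ u = v ++ [Sum.inr i] := by
  simp only [Ln, IsPlain, Set.mem_union, Set.mem_iUnion, Set.mem_ofPred_eq]

namespace An

variable {n : ℕ} {s : St n} {a : Fin n ⊕ Fin n} {i : Fin n} {u : List (Fin n ⊕ Fin n)}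

theorem not_E_p : ¬(An n).E s a .p := by
  simp [An]

theorem E_pi_iff :
    (An n).E s a (.pi i) ↔ (s = .p ∨ s = .pi i) ∧ ∃ j ≠ i, a = Sum.inl j := by
  simp only [An]
  grind

theorem E_qi_iff :
    (An n).E s a (.qi i) ↔
      (s = .p ∨ s = .pi i) ∧ a = Sum.inl i ∨ s = .qi i ∧ ∃ j, a = Sum.inl j := by
  simp only [An]
  grind

theorem E_r_iff : (An n).E s a .r ↔ ∃ i, s = .qi i ∧ a = Sum.inr i := by
  simp [An]

theorem p_mem_reach_iff : St.p ∈ (An n).reach u ↔ u = [] := by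
  cases u using List.reverseRecOn with
  | nil => simp [NFA'.mem_reach_nil, An]
  | append_singleton u a => simp [NFA'.mem_reach_append_singleton, not_E_p]

theorem pi_mem_reach_append_singleton_iff :
    St.pi i ∈ (An n).reach (u ++ [a]) ↔
      (St.p ∈ (An n).reach u ∨ St.pi i ∈ (An n).reach u) ∧ ∃ j ≠ i, a = Sum.inl j := by
  simp only [NFA'.mem_reach_append_singleton, E_pi_iff]
  grind

theorem qi_mem_reach_append_singleton_iff :
    St.qi i ∈ (An n).reach (u ++ [a]) ↔
      (St.p ∈ (An n).reach u ∨ St.pi i ∈ (An n).reach u) ∧ a = Sum.inl i ∨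
        St.qi i ∈ (An n).reach u ∧ ∃ j, a = Sum.inl j := by
  simp only [NFA'.mem_reach_append_singleton, E_qi_iff]
  grind

theorem p_or_pi_mem_reach_iff :
    St.p ∈ (An n).reach u ∨ St.pi i ∈ (An n).reach u ↔ IsPlain u ∧ Sum.inl i ∉ u := by
  induction u using List.reverseRecOn with
  | nil => simp [p_mem_reach_iff, IsPlain.nil]
  | append_singleton u a ih =>
    have hp : St.p ∉ (An n).reach (u ++ [a]) := by simp [p_mem_reach_iff]
    rw [or_iff_right hp, pi_mem_reach_append_singleton_iff, ih, IsPlain.append_singleton_iff]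
    grind

theorem qi_mem_reach_iff :
    St.qi i ∈ (An n).reach u ↔ IsPlain u ∧ Sum.inl i ∈ u := by
  induction u using List.reverseRecOn with
  | nil => simp [NFA'.mem_reach_nil, An]
  | append_singleton u a ih =>
    rw [qi_mem_reach_append_singleton_iff, p_or_pi_mem_reach_iff, ih,
      IsPlain.append_singleton_iff]
    grind

theorem r_mem_reach_iff :
    St.r ∈ (An n).reach u ↔
      ∃ i v, IsPlain v ∧ Sum.inl i ∈ v ∧ u = v ++ [Sum.inr i] := by
  cases u using List.reverseRecOn with
  | nil => simp [NFA'.mem_reach_nil, An]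
  | append_singleton u a =>
    simp only [NFA'.mem_reach_append_singleton, E_r_iff, List.append_singleton_inj]
    grind [qi_mem_reach_iff]

theorem mem_lang_of_isPlain (hu : IsPlain u) : u ∈ (An n).lang := by
  by_cases hne : u = []
  · exact ⟨.p, p_mem_reach_iff.2 hne⟩
  · obtain ⟨j, hj⟩ := hu.exists_inl_mem hne
    exact ⟨.qi j, qi_mem_reach_iff.2 ⟨hu, hj⟩⟩

end An

/-- the NFA `A_n` accepts exactly the language `L_n`. -/
theorem stmt14 (n : ℕ) (hn : 1 ≤ n) : (An n).lang = Ln n := by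
  ext u
  rw [mem_Ln_iff]
  constructor
  · rintro ⟨s, hs⟩
    cases s with
    | p => exact .inl (An.p_mem_reach_iff.1 hs ▸ IsPlain.nil)
    | r => exact .inr (An.r_mem_reach_iff.1 hs)
    | pi i => exact .inl (An.p_or_pi_mem_reach_iff.1 (.inr hs)).1
    | qi i => exact .inl (An.qi_mem_reach_iff.1 hs).1
  · rintro (hu | hu)
    · exact An.mem_lang_of_isPlain hu
    · exact ⟨.r, An.r_mem_reach_iff.2 hu⟩
end
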